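/- Let f, g ∈ H₂ satisfy |f*(e^{iθ})| = |g*(e^{iθ})| for almost every θ ∈ [0, 2π), and suppose f is outer. Then there exists an inner function u ∈ H_∞ (|u*(e^{iθ})| = 1 a.e.) such that g = u·f on the unit disk. -/

import Mathlib

open Complex MeasureTheory Filter Set

/-! Comparing `f` with its dilates shows that a Hardy function satisfies
`log ‖f w‖ ≤ P[log ‖f*‖](w)`, where `P` is the Poisson integral. When `f` is outer, equality holds
at `w = 0`; dividing `f` by a zero-free holomorphic function of modulus `exp P[log ‖f*‖]` and
applying the maximum principle, equality holds throughout the disk. Hence `f` has no zeros and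
`‖g‖ ≤ exp P[log ‖g*‖] = exp P[log ‖f*‖] = ‖f‖`, so `g / f` is bounded by `1`, with unimodular
boundary values `g* / f*`. -/

section HardySpace

open Metric Real Topology

/-! ### Averages over the unit circle -/

/-- Normalized Lebesgue measure `dθ / 2π` on the angles `0 < θ ≤ 2π` parametrizing the unit circle,
for averages and `Lᵖ` norms of boundary functions. -/
noncomputable def arcMeasure : Measure ℝ := ProbabilityTheory.cond volume (Ioc 0 (2 * π))

instance : IsProbabilityMeasure arcMeasure :=
  ProbabilityTheory.cond_isProbabilityMeasure_of_finite (by simp [pi_pos]) measure_Ioc_lt_top.ne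

theorem integral_arcMeasure_eq {E : Type*} [NormedAddCommGroup E] [NormedSpace ℝ E] (φ : ℝ → E) :
    ∫ θ, φ θ ∂arcMeasure = (2 * π)⁻¹ • ∫ θ in 0..2 * π, φ θ := by
  rw [arcMeasure, ProbabilityTheory.cond, integral_smul_measure,
    intervalIntegral.integral_of_le two_pi_pos.le]
  simp [ENNReal.toReal_ofReal pi_pos.le]

theorem circleAverage_eq_integral_arcMeasure {E : Type*} [NormedAddCommGroup E] [NormedSpace ℝ E]
    (Φ : ℂ → E) : circleAverage Φ 0 1 = ∫ θ, Φ (circleMap 0 1 θ) ∂arcMeasure := by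
  rw [integral_arcMeasure_eq, circleAverage_def]

theorem integrable_arcMeasure_iff {E : Type*} [NormedAddCommGroup E] {φ : ℝ → E} :
    Integrable φ arcMeasure ↔ IntervalIntegrable φ volume 0 (2 * π) := by
  rw [arcMeasure, ProbabilityTheory.cond, intervalIntegrable_iff_integrableOn_Ioc_of_le
    two_pi_pos.le, integrable_smul_measure (ENNReal.inv_ne_zero.2 measure_Ioc_lt_top.ne)
    (ENNReal.inv_ne_top.2 (by simp [pi_pos]))]
  rfl

theorem integrable_arcMeasure_of_continuous {E : Type*} [NormedAddCommGroup E] {φ : ℝ → E}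
    (hφ : Continuous φ) : Integrable φ arcMeasure :=
  integrable_arcMeasure_iff.2 (hφ.intervalIntegrable _ _)

theorem ae_arcMeasure_iff {p : ℝ → Prop} :
    (∀ᵐ θ ∂arcMeasure, p θ) ↔ ∀ᵐ θ ∂volume.restrict (Ico 0 (2 * π)), p θ := by
  rw [arcMeasure, ProbabilityTheory.cond, Measure.ae_ennreal_smul_measure_iff
    (ENNReal.inv_ne_zero.2 measure_Ioc_lt_top.ne), restrict_Ico_eq_restrict_Ioc]

/-! ### Poisson integrals -/

theorem exists_eq_polynomial_add_conj_polynomial {q : C(UnitAddCircle, ℂ)}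
    (hq : q ∈ Submodule.span ℂ (range fourier)) :
    ∃ P Q : Polynomial ℂ, ∀ x : UnitAddCircle,
      q x = P.eval (x.toCircle : ℂ) + (starRingEnd ℂ) (Q.eval (x.toCircle : ℂ)) := by
  induction hq using Submodule.span_induction with
  | mem _ h =>
    obtain ⟨n, rfl⟩ := h
    obtain ⟨m, rfl | rfl⟩ := n.eq_nat_or_neg
    · exact ⟨.X ^ m, 0, by simp [fourier_apply, AddCircle.toCircle_nsmul]⟩
    · exact ⟨0, .X ^ m, fun x ↦ by
        rw [fourier_neg]; simp [fourier_apply, AddCircle.toCircle_nsmul]⟩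
  | zero => exact ⟨0, 0, by simp⟩
  | add _ _ _ _ h₁ h₂ =>
    obtain ⟨P₁, Q₁, h₁⟩ := h₁
    obtain ⟨P₂, Q₂, h₂⟩ := h₂
    exact ⟨P₁ + P₂, Q₁ + Q₂, fun x ↦ by simp [h₁, h₂]; ring⟩
  | smul c _ _ h =>
    obtain ⟨P, Q, h⟩ := h
    exact ⟨.C c * P, .C (starRingEnd ℂ c) * Q, fun x ↦ by simp [h]; ring⟩

theorem exists_polynomial_abs_sub_re_eval_lt {φ : ℂ → ℝ} (hφ : ContinuousOn φ (sphere 0 1))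
    {ε : ℝ} (hε : 0 < ε) :
    ∃ P : Polynomial ℂ, ∀ z ∈ sphere (0 : ℂ) 1, |φ z - (P.eval z).re| < ε := by
  let ψ : C(UnitAddCircle, ℂ) :=
    ⟨fun x ↦ φ x.toCircle, continuous_ofReal.comp <|
      hφ.comp_continuous (by fun_prop) fun x ↦ by simp [Circle.norm_coe]⟩
  have hψ : ψ ∈
      closure (Submodule.span ℂ (range (fourier (T := 1))) : Set C(UnitAddCircle, ℂ)) := by
    rw [← Submodule.topologicalClosure_coe, span_fourier_closure_eq_top]
    trivial
  obtain ⟨q, hq, hψq⟩ := Metric.mem_closure_iff.1 hψ ε hε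
  obtain ⟨P, Q, hPQ⟩ := exists_eq_polynomial_add_conj_polynomial hq
  refine ⟨P + Q, fun z hz ↦ ?_⟩
  obtain ⟨x, hx⟩ := (AddCircle.homeomorphCircle one_ne_zero).surjective (⟨z, hz⟩ : Circle)
  have hxz : (x.toCircle : ℂ) = z := by
    rw [← AddCircle.homeomorphCircle_apply one_ne_zero, hx]
  calc |φ z - ((P + Q).eval z).re| = |(ψ x - q x).re| := by simp [ψ, hPQ, hxz]
    _ ≤ ‖ψ x - q x‖ := abs_re_le_norm _
    _ ≤ dist ψ q := by rw [← dist_eq_norm]; exact ContinuousMap.dist_apply_le_dist x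
    _ < ε := hψq

theorem exists_polynomial_le_re_eval_le_add {φ : ℂ → ℝ} (hφ : ContinuousOn φ (sphere 0 1))
    {ε : ℝ} (hε : 0 < ε) :
    ∃ P : Polynomial ℂ, ∀ z ∈ sphere (0 : ℂ) 1,
      φ z ≤ (P.eval z).re ∧ (P.eval z).re ≤ φ z + ε := by
  obtain ⟨P, hP⟩ := exists_polynomial_abs_sub_re_eval_lt hφ (half_pos hε)
  refine ⟨P + .C ((ε / 2 : ℝ) : ℂ), fun z hz ↦ ?_⟩
  have := abs_lt.1 (hP z hz)
  simp only [Polynomial.eval_add, Polynomial.eval_C, add_re, ofReal_re]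
  constructor <;> linarith

/-- The Poisson integral at `w` in the unit disk of a boundary function `φ`, given as a function of
the angle: the harmonic extension of `φ` to the disk. -/
noncomputable def poissonIntegral (φ : ℝ → ℝ) (w : ℂ) : ℝ :=
  ∫ θ, poissonKernel 0 w (circleMap 0 1 θ) * φ θ ∂arcMeasure

theorem poissonKernel_circleMap_nonneg {w : ℂ} (hw : w ∈ ball 0 1) (θ : ℝ) :
    0 ≤ poissonKernel 0 w (circleMap 0 1 θ) := by
  have : ‖w‖ ^ 2 ≤ 1 := pow_le_one₀ (norm_nonneg w) (mem_ball_zero_iff.1 hw).le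
  simpa [poissonKernel_def] using div_nonneg (sub_nonneg.2 this) (by positivity)

theorem continuous_poissonKernel_circleMap {w : ℂ} (hw : w ∈ ball 0 1) :
    Continuous fun θ ↦ poissonKernel 0 w (circleMap 0 1 θ) := by
  rw [poissonKernel_eq_re_herglotzRieszKernel]
  exact continuous_re.comp <| (continuousOn_herglotzRieszKernel_sphere hw).comp_continuous
    (continuous_circleMap 0 1) (circleMap_mem_sphere' 0 1)

theorem poissonKernel_circleMap_le {w : ℂ} (hw : w ∈ ball 0 1) (θ : ℝ) :
    poissonKernel 0 w (circleMap 0 1 θ) ≤ (1 + ‖w‖) / (1 - ‖w‖) := by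
  simpa [poissonKernel_eq_re_herglotzRieszKernel, herglotzRieszKernel_def] using
    re_herglotzRieszKernel_le (circleMap_mem_sphere 0 zero_le_one θ) hw

theorem integrable_poissonKernel_mul {φ : ℝ → ℝ} (hφ : Integrable φ arcMeasure) {w : ℂ}
    (hw : w ∈ ball 0 1) :
    Integrable (fun θ ↦ poissonKernel 0 w (circleMap 0 1 θ) * φ θ) arcMeasure :=
  hφ.bdd_mul (continuous_poissonKernel_circleMap hw).aestronglyMeasurable
    (ae_of_all _ fun θ ↦ by
      rw [Real.norm_of_nonneg (poissonKernel_circleMap_nonneg hw θ)]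
      exact poissonKernel_circleMap_le hw θ)

theorem poissonIntegral_mono {φ ψ : ℝ → ℝ} (hφ : Integrable φ arcMeasure)
    (hψ : Integrable ψ arcMeasure) (hφψ : φ ≤ᵐ[arcMeasure] ψ) {w : ℂ} (hw : w ∈ ball 0 1) :
    poissonIntegral φ w ≤ poissonIntegral ψ w := by
  refine integral_mono_ae (integrable_poissonKernel_mul hφ hw)
    (integrable_poissonKernel_mul hψ hw) ?_
  filter_upwards [hφψ] with θ hθ
  exact mul_le_mul_of_nonneg_left hθ (poissonKernel_circleMap_nonneg hw θ)

theorem poissonIntegral_of_harmonicOnNhd {u : ℂ → ℝ}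
    (hu : InnerProductSpace.HarmonicOnNhd u (closedBall 0 1)) {w : ℂ} (hw : w ∈ ball 0 1) :
    poissonIntegral (fun θ ↦ u (circleMap 0 1 θ)) w = u w := by
  rw [← hu.circleAverage_poissonKernel_smul hw, circleAverage_eq_integral_arcMeasure]
  rfl

theorem poissonIntegral_const (a : ℝ) {w : ℂ} (hw : w ∈ ball 0 1) :
    poissonIntegral (fun _ ↦ a) w = a :=
  poissonIntegral_of_harmonicOnNhd (u := fun _ ↦ a)
    (fun _ _ ↦ InnerProductSpace.harmonicAt_const a) hw

theorem poissonIntegral_add {φ ψ : ℝ → ℝ} (hφ : Integrable φ arcMeasure)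
    (hψ : Integrable ψ arcMeasure) {w : ℂ} (hw : w ∈ ball 0 1) :
    poissonIntegral (fun θ ↦ φ θ + ψ θ) w = poissonIntegral φ w + poissonIntegral ψ w := by
  simp only [poissonIntegral, mul_add]
  exact integral_add (integrable_poissonKernel_mul hφ hw) (integrable_poissonKernel_mul hψ hw)

theorem poissonIntegral_apply_zero (φ : ℝ → ℝ) : poissonIntegral φ 0 = ∫ θ, φ θ ∂arcMeasure := by
  simp [poissonIntegral, poissonKernel_def]

theorem tendsto_poissonIntegral {ι : Type*} {l : Filter ι} {φ : ι → ℝ → ℝ} {ψ : ℝ → ℝ}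
    (hψ : Integrable ψ arcMeasure) (hφ : ∀ᶠ i in l, Integrable (φ i) arcMeasure)
    (hlim : Tendsto (fun i ↦ eLpNorm (φ i - ψ) 1 arcMeasure) l (𝓝 0)) {w : ℂ}
    (hw : w ∈ ball 0 1) :
    Tendsto (fun i ↦ poissonIntegral (φ i) w) l (𝓝 (poissonIntegral ψ w)) := by
  refine tendsto_integral_of_L1' _ (integrable_poissonKernel_mul hψ hw).aestronglyMeasurable
    (hφ.mono fun i hi ↦ integrable_poissonKernel_mul hi hw) ?_
  set K := (1 + ‖w‖) / (1 - ‖w‖)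
  have hle (i : ι) : eLpNorm ((fun θ ↦ poissonKernel 0 w (circleMap 0 1 θ) * φ i θ) -
      fun θ ↦ poissonKernel 0 w (circleMap 0 1 θ) * ψ θ) 1 arcMeasure ≤
      ENNReal.ofReal K * eLpNorm (φ i - ψ) 1 arcMeasure := by
    refine eLpNorm_le_mul_eLpNorm_of_ae_le_mul (ae_of_all _ fun θ ↦ ?_) 1
    simp only [Pi.sub_apply]
    rw [← mul_sub, norm_mul, Real.norm_of_nonneg (poissonKernel_circleMap_nonneg hw θ)]
    gcongr
    exact poissonKernel_circleMap_le hw θ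
  have hlim' := ENNReal.Tendsto.const_mul (a := ENNReal.ofReal K) hlim (.inr ENNReal.ofReal_ne_top)
  rw [mul_zero] at hlim'
  exact tendsto_of_tendsto_of_tendsto_of_le_of_le tendsto_const_nhds hlim'
    (fun _ ↦ zero_le) hle

theorem norm_le_exp_poissonIntegral_of_norm_le_exp {h : ℂ → ℂ} {φ : ℂ → ℝ} {w : ℂ}
    (hh : DiffContOnCl ℂ h (ball 0 1)) (hφ : ContinuousOn φ (sphere 0 1))
    (hhφ : ∀ z ∈ sphere (0 : ℂ) 1, ‖h z‖ ≤ Real.exp (φ z)) (hw : w ∈ ball 0 1) :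
    ‖h w‖ ≤ Real.exp (poissonIntegral (fun θ ↦ φ (circleMap 0 1 θ)) w) := by
  rcases eq_or_ne (h w) 0 with h0 | h0
  · simpa [h0] using (Real.exp_pos _).le
  rw [← Real.log_le_iff_le_exp (norm_pos_iff.2 h0)]
  refine le_of_forall_pos_le_add fun ε hε ↦ ?_
  -- Multiplication by `exp (-P)`, where `Re P ≥ φ` on the circle, reduces the claim to the maximum
  -- modulus principle.
  obtain ⟨P, hP⟩ := exists_polynomial_le_re_eval_le_add hφ hε
  have hmax : ‖Complex.exp (-P.eval w) * h w‖ ≤ 1 := by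
    refine norm_le_of_forall_mem_frontier_norm_le isBounded_ball
      ((by fun_prop : Differentiable ℂ fun z ↦ Complex.exp (-P.eval z)).diffContOnCl.smul hh)
      (fun z hz ↦ ?_) (subset_closure hw)
    rw [frontier_ball 0 one_ne_zero] at hz
    rw [smul_eq_mul, norm_mul, Complex.norm_exp, neg_re, Real.exp_neg,
      inv_mul_le_one₀ (Real.exp_pos _)]
    exact (hhφ z hz).trans (Real.exp_le_exp.2 (hP z hz).1)
  have hφi : Integrable (fun θ ↦ φ (circleMap 0 1 θ)) arcMeasure :=
    integrable_arcMeasure_of_continuous <| hφ.comp_continuous (continuous_circleMap 0 1)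
      (circleMap_mem_sphere 0 zero_le_one)
  have hPi : Integrable (fun θ ↦ (P.eval (circleMap 0 1 θ)).re) arcMeasure :=
    integrable_arcMeasure_of_continuous (by fun_prop)
  calc Real.log ‖h w‖ ≤ (P.eval w).re := by
        rwa [norm_mul, Complex.norm_exp, neg_re, Real.exp_neg, inv_mul_le_one₀ (Real.exp_pos _),
          ← Real.log_le_iff_le_exp (norm_pos_iff.2 h0)] at hmax
    _ = poissonIntegral (fun θ ↦ (P.eval (circleMap 0 1 θ)).re) w :=
        (poissonIntegral_of_harmonicOnNhd (u := fun z ↦ (P.eval z).re)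
          (fun z _ ↦ (P.differentiable.analyticAt z).harmonicAt_re) hw).symm
    _ ≤ poissonIntegral (fun θ ↦ φ (circleMap 0 1 θ) + ε) w :=
        poissonIntegral_mono hPi (hφi.add (integrable_const ε))
          (ae_of_all _ fun θ ↦ (hP _ (circleMap_mem_sphere 0 zero_le_one θ)).2) hw
    _ = poissonIntegral (fun θ ↦ φ (circleMap 0 1 θ)) w + ε := by
        rw [poissonIntegral_add hφi (integrable_const ε) hw, poissonIntegral_const ε hw]

theorem toIocMod_arg_circleMap {θ : ℝ} (hθ : θ ∈ Ioc 0 (2 * π)) :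
    toIocMod two_pi_pos 0 (circleMap 0 1 θ).arg = θ := by
  rw [circleMap_zero, ofReal_one, one_mul, arg_exp_mul_I, toIocMod_toIocMod, toIocMod_eq_self]
  simpa using hθ

theorem exists_differentiableOn_norm_eq_exp_poissonIntegral {φ : ℝ → ℝ}
    (hφ : Integrable φ arcMeasure) :
    ∃ F : ℂ → ℂ, DifferentiableOn ℂ F (ball 0 1) ∧
      ∀ w ∈ ball (0 : ℂ) 1, ‖F w‖ = Real.exp (poissonIntegral φ w) := by
  -- The Herglotz integral takes functions on the circle, so `φ` is read off from the argument.
  let g : ℂ → ℝ := fun ζ ↦ φ (toIocMod two_pi_pos 0 ζ.arg)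
  have hgφ {θ : ℝ} (hθ : θ ∈ uIoc 0 (2 * π)) : φ θ = g (circleMap 0 1 θ) := by
    rw [uIoc_of_le two_pi_pos.le] at hθ
    simp only [g, toIocMod_arg_circleMap hθ]
  have hg : CircleIntegrable g 0 1 :=
    (integrable_arcMeasure_iff.1 hφ).congr fun θ hθ ↦ hgφ hθ
  refine ⟨fun w ↦ Complex.exp (circleAverage (fun ζ ↦ herglotzRieszKernel 0 w ζ • (g ζ : ℂ)) 0 1),
    (differentiableOn_circleAverage_herglotzRieszKernel_smul
      (integrable_arcMeasure_iff.1 (integrable_arcMeasure_iff.2 hg).ofReal)).cexp, fun w hw ↦ ?_⟩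
  rw [Complex.norm_exp, re_circleAverage_herglotzRieszKernel_smul hg hw,
    ← poissonKernel_eq_re_herglotzRieszKernel, circleAverage_def, poissonIntegral,
    integral_arcMeasure_eq]
  congr 2
  exact intervalIntegral.integral_congr_ae (ae_of_all _ fun θ hθ ↦ by simp [hgφ hθ])

/-! ### Integrals of regularized logarithms -/

theorem abs_log_add_sub_log_add_le {x y δ : ℝ} (hx : 0 ≤ x) (hy : 0 ≤ y) (hδ : 0 < δ) :
    |Real.log (x + δ) - Real.log (y + δ)| ≤ |x - y| / δ := by
  have log_sub_le {s t : ℝ} (hs : 0 ≤ s) (ht : 0 ≤ t) :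
      Real.log (s + δ) - Real.log (t + δ) ≤ |s - t| / δ := calc
    _ = Real.log ((s + δ) / (t + δ)) := (Real.log_div (by positivity) (by positivity)).symm
    _ ≤ (s + δ) / (t + δ) - 1 := Real.log_le_sub_one_of_pos (by positivity)
    _ = (s - t) / (t + δ) := by field_simp; ring
    _ ≤ |s - t| / δ := by gcongr; exacts [le_abs_self _, by linarith]
  exact abs_sub_le_iff.2 ⟨log_sub_le hx hy, abs_sub_comm x y ▸ log_sub_le hy hx⟩

section LogIntegral

variable {α E : Type*} [MeasurableSpace α] [NormedAddCommGroup E] {μ : Measure α} {f : α → E}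

theorem aestronglyMeasurable_log_norm_add (hf : AEStronglyMeasurable f μ) (δ : ℝ) :
    AEStronglyMeasurable (fun x ↦ Real.log (‖f x‖ + δ)) μ :=
  (Real.measurable_log.comp_aemeasurable (hf.norm.aemeasurable.add_const δ)).aestronglyMeasurable

theorem integrable_log_norm_add [IsFiniteMeasure μ] (hf : Integrable f μ) {δ : ℝ} (hδ : 0 < δ) :
    Integrable (fun x ↦ Real.log (‖f x‖ + δ)) μ := by
  refine ((hf.norm.div_const δ).add (integrable_const |Real.log δ|)).mono'
    (aestronglyMeasurable_log_norm_add hf.1 δ) (ae_of_all _ fun x ↦ ?_)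
  have := abs_log_add_sub_log_add_le (norm_nonneg (f x)) le_rfl hδ
  rw [zero_add, sub_zero, abs_norm] at this
  calc |Real.log (‖f x‖ + δ)| ≤ |Real.log (‖f x‖ + δ) - Real.log δ| + |Real.log δ| :=
        sub_le_iff_le_add.1 (abs_sub_abs_le_abs_sub _ _)
    _ ≤ ‖f x‖ / δ + |Real.log δ| := by gcongr

theorem tendsto_log_add_nhdsGT_zero {x : ℝ} (hx : x ≠ 0) :
    Tendsto (fun δ ↦ Real.log (x + δ)) (𝓝[>] 0) (𝓝 (Real.log x)) := by
  have : ContinuousAt (fun δ : ℝ ↦ Real.log (x + δ)) 0 := by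
    fun_prop (disch := simpa using hx)
  simpa using this.tendsto.mono_left nhdsWithin_le_nhds

theorem ae_ne_zero_of_le_integral_log_norm_add [IsFiniteMeasure μ] (hf : Integrable f μ) {L : ℝ}
    (hL : ∀ δ > 0, L ≤ ∫ x, Real.log (‖f x‖ + δ) ∂μ) : ∀ᵐ x ∂μ, f x ≠ 0 := by
  -- If `f` vanished on a set of measure `m > 0`, then `δ = exp (-T)` would give `T * m ≤ C` for
  -- all `T > 0`.
  set C := ∫ x, Real.log (‖f x‖ + 1) ∂μ - L
  have hC {T : ℝ} (hT : 0 < T) : T * μ.real {x | f x = 0} ≤ C := by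
    have hδ : 0 < Real.exp (-T) := Real.exp_pos _
    have hδ1 : Real.exp (-T) ≤ 1 := by simpa using hT.le
    have hlog : 0 ≤ fun x ↦ Real.log (‖f x‖ + 1) - Real.log (‖f x‖ + Real.exp (-T)) := fun x ↦
      sub_nonneg.2 (Real.log_le_log (by positivity) (by gcongr))
    calc T * μ.real {x | f x = 0}
        ≤ T * μ.real {x | T ≤ Real.log (‖f x‖ + 1) - Real.log (‖f x‖ + Real.exp (-T))} := by
          gcongr; exacts [measure_ne_top _ _, fun h ↦ by simp [h]]
      _ ≤ ∫ x, (Real.log (‖f x‖ + 1) - Real.log (‖f x‖ + Real.exp (-T))) ∂μ :=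
          mul_meas_ge_le_integral_of_nonneg (ae_of_all _ hlog)
            ((integrable_log_norm_add hf one_pos).sub (integrable_log_norm_add hf hδ)) T
      _ ≤ C := by
          rw [integral_sub (integrable_log_norm_add hf one_pos) (integrable_log_norm_add hf hδ)]
          exact sub_le_sub_left (hL _ hδ) _
  by_contra h
  have hpos : 0 < μ.real {x | f x = 0} := by
    simpa [measureReal_def, ENNReal.toReal_pos_iff, pos_iff_ne_zero, ae_iff] using h
  have := hC (T := (|C| + 1) / μ.real {x | f x = 0}) (by positivity)
  rw [div_mul_cancel₀ _ hpos.ne'] at this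
  linarith [le_abs_self C]

theorem integrable_log_norm_of_le_integral_log_norm_add [IsFiniteMeasure μ] (hf : Integrable f μ)
    {L : ℝ} (hL : ∀ δ > 0, L ≤ ∫ x, Real.log (‖f x‖ + δ) ∂μ) :
    Integrable (fun x ↦ Real.log ‖f x‖) μ := by
  have hne := ae_ne_zero_of_le_integral_log_norm_add hf hL
  have hlog1 := integrable_log_norm_add hf one_pos
  suffices h : MemLp (fun x ↦ Real.log (‖f x‖ + 1) - Real.log ‖f x‖) 1 μ by
    exact (hlog1.sub (memLp_one_iff_integrable.1 h)).congr (ae_of_all _ fun x ↦ by simp)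
  refine ⟨hlog1.1.sub (by simpa using aestronglyMeasurable_log_norm_add hf.1 0), ?_⟩
  refine (Lp.eLpNorm_le_of_ae_tendsto (u := 𝓝[>] (0 : ℝ))
    (C := ENNReal.ofReal (∫ x, Real.log (‖f x‖ + 1) ∂μ - L))
    (f := fun δ x ↦ Real.log (‖f x‖ + 1) - Real.log (‖f x‖ + δ)) ?_
    (fun δ ↦ hlog1.1.sub (aestronglyMeasurable_log_norm_add hf.1 δ)) ?_).trans_lt
    ENNReal.ofReal_lt_top
  · filter_upwards [Ioo_mem_nhdsGT one_pos] with δ hδ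
    have hlogδ := integrable_log_norm_add hf hδ.1
    have : 0 ≤ fun x ↦ Real.log (‖f x‖ + 1) - Real.log (‖f x‖ + δ) := fun x ↦
      sub_nonneg.2 (Real.log_le_log (add_pos_of_nonneg_of_pos (norm_nonneg _) hδ.1)
        (by gcongr; exact hδ.2.le))
    rw [eLpNorm_one_eq_lintegral_enorm]
    refine (ofReal_integral_norm_eq_lintegral_enorm (hlog1.sub hlogδ)).ge.trans
      (ENNReal.ofReal_le_ofReal ?_)
    simp only [Real.norm_of_nonneg (this _), Pi.sub_apply]
    rw [integral_sub hlog1 hlogδ]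
    exact sub_le_sub_left (hL _ hδ.1) _
  · filter_upwards [hne] with x hx
    exact tendsto_const_nhds.sub (tendsto_log_add_nhdsGT_zero (norm_ne_zero_iff.2 hx))

theorem tendsto_eLpNorm_log_norm_add_sub_log_norm [IsFiniteMeasure μ] (hf : Integrable f μ)
    (hne : ∀ᵐ x ∂μ, f x ≠ 0) (hlog : Integrable (fun x ↦ Real.log ‖f x‖) μ) :
    Tendsto (fun δ ↦ eLpNorm ((fun x ↦ Real.log (‖f x‖ + δ)) - fun x ↦ Real.log ‖f x‖) 1 μ)
      (𝓝[>] 0) (𝓝 0) := by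
  simp only [eLpNorm_one_eq_lintegral_enorm]
  rw [← lintegral_zero (μ := μ)]
  refine tendsto_lintegral_filter_of_dominated_convergence'
    (fun x ↦ ‖Real.log (‖f x‖ + 1) - Real.log ‖f x‖‖ₑ)
    (.of_forall fun δ ↦ ((aestronglyMeasurable_log_norm_add hf.1 δ).sub hlog.1).enorm) ?_
    ((integrable_log_norm_add hf one_pos).sub hlog).2.ne ?_
  · filter_upwards [Ioo_mem_nhdsGT one_pos] with δ hδ
    filter_upwards [hne] with x hx
    have hx : 0 < ‖f x‖ := norm_pos_iff.2 hx
    have hδx : Real.log ‖f x‖ ≤ Real.log (‖f x‖ + δ) :=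
      Real.log_le_log hx (le_add_of_nonneg_right hδ.1.le)
    have hδ1 : Real.log (‖f x‖ + δ) ≤ Real.log (‖f x‖ + 1) :=
      Real.log_le_log (add_pos hx hδ.1) (add_le_add_right hδ.2.le _)
    exact enorm_le_iff_norm_le.2 <|
      abs_le_abs_of_nonneg (sub_nonneg.2 hδx) (sub_le_sub_right hδ1 _)
  · filter_upwards [hne] with x hx
    simpa using ((tendsto_log_add_nhdsGT_zero (norm_ne_zero_iff.2 hx)).sub_const
      (Real.log ‖f x‖)).enorm

end LogIntegral

/-! ### Hardy functions and their boundary values -/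

/-- `f` belongs to the Hardy space `H¹` of the unit disk and has the boundary function `fStar`:
`f` is holomorphic, its radial limits are `fStar` almost everywhere, and its dilates converge to
`fStar` in `L¹`. -/
structure HasHardyBoundary (f : ℂ → ℂ) (fStar : ℝ → ℂ) : Prop where
  differentiableOn : DifferentiableOn ℂ f (ball 0 1)
  tendsto_radial : ∀ᵐ θ ∂arcMeasure,
    Tendsto (fun r ↦ f (circleMap 0 r θ)) (𝓝[<] 1) (𝓝 (fStar θ))
  integrable : Integrable fStar arcMeasure
  tendsto_eLpNorm : Tendsto (fun r ↦ eLpNorm ((fun θ ↦ f (circleMap 0 r θ)) - fStar) 1 arcMeasure)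
    (𝓝[<] 1) (𝓝 0)

theorem diffContOnCl_comp_real_mul {f : ℂ → ℂ} (hf : DifferentiableOn ℂ f (ball 0 1)) {r : ℝ}
    (hr : r ∈ Ioo (0 : ℝ) 1) : DiffContOnCl ℂ (fun z ↦ f (r * z)) (ball 0 1) := by
  refine DifferentiableOn.diffContOnCl (hf.comp (by fun_prop) fun z hz ↦ ?_)
  rw [closure_ball 0 one_ne_zero, mem_closedBall_zero_iff] at hz
  rw [mem_ball_zero_iff, norm_mul, norm_real, Real.norm_of_nonneg hr.1.le]
  exact mul_lt_one_of_nonneg_of_lt_one_left hr.1.le hr.2 hz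

theorem circleMap_zero_eq_real_mul (r θ : ℝ) : circleMap 0 r θ = r * circleMap 0 1 θ := by
  simp [circleMap_zero]

theorem continuous_comp_circleMap {f : ℂ → ℂ} (hf : DifferentiableOn ℂ f (ball 0 1)) {r : ℝ}
    (hr : r ∈ Ioo (0 : ℝ) 1) : Continuous fun θ ↦ f (circleMap 0 r θ) :=
  hf.continuousOn.comp_continuous (continuous_circleMap 0 r) fun θ ↦ by
    simpa [abs_of_pos hr.1] using hr.2

namespace HasHardyBoundary

variable {f : ℂ → ℂ} {fStar : ℝ → ℂ}

theorem tendsto_eLpNorm_log_norm_add (hf : HasHardyBoundary f fStar) {δ : ℝ} (hδ : 0 < δ) :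
    Tendsto (fun r ↦ eLpNorm ((fun θ ↦ Real.log (‖f (circleMap 0 r θ)‖ + δ)) -
      fun θ ↦ Real.log (‖fStar θ‖ + δ)) 1 arcMeasure) (𝓝[<] 1) (𝓝 0) := by
  have hlim := ENNReal.Tendsto.const_mul (a := ENNReal.ofReal δ⁻¹) hf.tendsto_eLpNorm
    (.inr ENNReal.ofReal_ne_top)
  rw [mul_zero] at hlim
  refine tendsto_of_tendsto_of_tendsto_of_le_of_le tendsto_const_nhds hlim (fun _ ↦ zero_le)
    fun r ↦ eLpNorm_le_mul_eLpNorm_of_ae_le_mul (ae_of_all _ fun θ ↦ ?_) 1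
  calc |Real.log (‖f (circleMap 0 r θ)‖ + δ) - Real.log (‖fStar θ‖ + δ)|
      ≤ |‖f (circleMap 0 r θ)‖ - ‖fStar θ‖| / δ :=
        abs_log_add_sub_log_add_le (norm_nonneg _) (norm_nonneg _) hδ
    _ ≤ δ⁻¹ * ‖f (circleMap 0 r θ) - fStar θ‖ := by
        rw [div_eq_inv_mul]
        gcongr
        exact abs_norm_sub_norm_le _ _

theorem norm_le_exp_poissonIntegral_log_add (hf : HasHardyBoundary f fStar) {δ : ℝ} (hδ : 0 < δ)
    {w : ℂ} (hw : w ∈ ball 0 1) :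
    ‖f w‖ ≤ Real.exp (poissonIntegral (fun θ ↦ Real.log (‖fStar θ‖ + δ)) w) := by
  have hIoo : ∀ᶠ r in 𝓝[<] (1 : ℝ), r ∈ Ioo (0 : ℝ) 1 := Ioo_mem_nhdsLT one_pos
  have hdil : ∀ᶠ r : ℝ in 𝓝[<] 1, ‖f (r * w)‖ ≤
      Real.exp (poissonIntegral (fun θ ↦ Real.log (‖f (circleMap 0 r θ)‖ + δ)) w) := by
    filter_upwards [hIoo] with r hr
    have hfr := diffContOnCl_comp_real_mul hf.differentiableOn hr
    have hpos (z : ℂ) : 0 < ‖f (r * z)‖ + δ := add_pos_of_nonneg_of_pos (norm_nonneg _) hδ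
    have hφ : ContinuousOn (fun z ↦ Real.log (‖f (r * z)‖ + δ)) (sphere 0 1) :=
      ((hfr.continuousOn_ball.mono sphere_subset_closedBall).norm.add_const δ).log
        fun z _ ↦ (hpos z).ne'
    simp only [circleMap_zero_eq_real_mul r]
    refine norm_le_exp_poissonIntegral_of_norm_le_exp hfr hφ (fun z _ ↦ ?_) hw
    rw [Real.exp_log (hpos z)]
    exact le_add_of_nonneg_right hδ.le
  have hlim : Tendsto (fun r : ℝ ↦ f (r * w)) (𝓝[<] 1) (𝓝 (f w)) := by
    have hfw : ContinuousAt f (((1 : ℝ) : ℂ) * w) := by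
      simpa using hf.differentiableOn.continuousOn.continuousAt (isOpen_ball.mem_nhds hw)
    have hrw : Tendsto (fun r : ℝ ↦ (r : ℂ) * w) (𝓝[<] 1) (𝓝 ((1 : ℝ) * w)) :=
      (by fun_prop : Continuous fun r : ℝ ↦ (r : ℂ) * w).continuousWithinAt
    simpa [Function.comp_def] using hfw.tendsto.comp hrw
  refine le_of_tendsto_of_tendsto hlim.norm ((Real.continuous_exp.tendsto _).comp ?_) hdil
  refine tendsto_poissonIntegral (integrable_log_norm_add hf.integrable hδ) ?_
    (hf.tendsto_eLpNorm_log_norm_add hδ) hw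
  filter_upwards [hIoo] with r hr
  exact integrable_log_norm_add
    (integrable_arcMeasure_of_continuous (continuous_comp_circleMap hf.differentiableOn hr)) hδ

theorem log_norm_zero_le_integral_log_add (hf : HasHardyBoundary f fStar) (h0 : f 0 ≠ 0) {δ : ℝ}
    (hδ : 0 < δ) : Real.log ‖f 0‖ ≤ ∫ θ, Real.log (‖fStar θ‖ + δ) ∂arcMeasure := by
  rw [Real.log_le_iff_le_exp (norm_pos_iff.2 h0), ← poissonIntegral_apply_zero]
  exact hf.norm_le_exp_poissonIntegral_log_add hδ (mem_ball_self one_pos)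

theorem ae_ne_zero (hf : HasHardyBoundary f fStar) (h0 : f 0 ≠ 0) :
    ∀ᵐ θ ∂arcMeasure, fStar θ ≠ 0 :=
  ae_ne_zero_of_le_integral_log_norm_add hf.integrable
    fun _ hδ ↦ hf.log_norm_zero_le_integral_log_add h0 hδ

theorem integrable_log_norm (hf : HasHardyBoundary f fStar) (h0 : f 0 ≠ 0) :
    Integrable (fun θ ↦ Real.log ‖fStar θ‖) arcMeasure :=
  integrable_log_norm_of_le_integral_log_norm_add hf.integrable
    fun _ hδ ↦ hf.log_norm_zero_le_integral_log_add h0 hδ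

theorem norm_le_exp_poissonIntegral_log (hf : HasHardyBoundary f fStar)
    (hne : ∀ᵐ θ ∂arcMeasure, fStar θ ≠ 0)
    (hlog : Integrable (fun θ ↦ Real.log ‖fStar θ‖) arcMeasure) {w : ℂ} (hw : w ∈ ball 0 1) :
    ‖f w‖ ≤ Real.exp (poissonIntegral (fun θ ↦ Real.log ‖fStar θ‖) w) := by
  have hpos : ∀ᶠ δ in 𝓝[>] (0 : ℝ), 0 < δ := self_mem_nhdsWithin
  refine ge_of_tendsto ((Real.continuous_exp.tendsto _).comp <| tendsto_poissonIntegral hlog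
    (hpos.mono fun δ hδ ↦ integrable_log_norm_add hf.integrable hδ)
    (tendsto_eLpNorm_log_norm_add_sub_log_norm hf.integrable hne hlog) hw) ?_
  exact hpos.mono fun δ hδ ↦ hf.norm_le_exp_poissonIntegral_log_add hδ hw

theorem norm_eq_exp_poissonIntegral_log (hf : HasHardyBoundary f fStar)
    (houter : ‖f 0‖ = Real.exp (∫ θ, Real.log ‖fStar θ‖ ∂arcMeasure)) {w : ℂ}
    (hw : w ∈ ball 0 1) :
    ‖f w‖ = Real.exp (poissonIntegral (fun θ ↦ Real.log ‖fStar θ‖) w) := by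
  have h0 : f 0 ≠ 0 := norm_pos_iff.1 (houter ▸ Real.exp_pos _)
  have hlog := hf.integrable_log_norm h0
  obtain ⟨F, hF, hFnorm⟩ := exists_differentiableOn_norm_eq_exp_poissonIntegral hlog
  have hFpos : ∀ z ∈ ball (0 : ℂ) 1, 0 < ‖F z‖ := fun z hz ↦ hFnorm z hz ▸ Real.exp_pos _
  have hquot0 : ‖f 0 / F 0‖ = 1 := by
    rw [norm_div, hFnorm 0 (mem_ball_self one_pos), poissonIntegral_apply_zero, houter,
      div_self (Real.exp_pos _).ne']
  have hmax : IsMaxOn (norm ∘ fun z ↦ f z / F z) (ball 0 1) 0 := fun z hz ↦ by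
    change ‖f z / F z‖ ≤ ‖f 0 / F 0‖
    rw [hquot0, norm_div, div_le_one (hFpos z hz), hFnorm z hz]
    exact hf.norm_le_exp_poissonIntegral_log (hf.ae_ne_zero h0) hlog hz
  have hquot : ‖f w / F w‖ = ‖f 0 / F 0‖ := Complex.norm_eqOn_of_isPreconnected_of_isMaxOn
    (convex_ball 0 1).isPreconnected isOpen_ball
    (hf.differentiableOn.div hF fun z hz ↦ norm_pos_iff.1 (hFpos z hz))
    (mem_ball_self one_pos) hmax hw
  rwa [hquot0, norm_div, div_eq_one_iff_eq (hFpos w hw).ne', hFnorm w hw] at hquot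

theorem norm_le_norm_of_outer {g : ℂ → ℂ} {gStar : ℝ → ℂ}
    (hf : HasHardyBoundary f fStar) (hg : HasHardyBoundary g gStar)
    (hmod : ∀ᵐ θ ∂arcMeasure, ‖fStar θ‖ = ‖gStar θ‖)
    (houter : ‖f 0‖ = Real.exp (∫ θ, Real.log ‖fStar θ‖ ∂arcMeasure)) {w : ℂ}
    (hw : w ∈ ball 0 1) : ‖g w‖ ≤ ‖f w‖ := by
  have h0 : f 0 ≠ 0 := norm_pos_iff.1 (houter ▸ Real.exp_pos _)
  have hgne : ∀ᵐ θ ∂arcMeasure, gStar θ ≠ 0 := by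
    filter_upwards [hmod, hf.ae_ne_zero h0] with θ hθ hne
    rwa [← norm_ne_zero_iff, ← hθ, norm_ne_zero_iff]
  have hloglog : (fun θ ↦ Real.log ‖fStar θ‖) =ᵐ[arcMeasure] fun θ ↦ Real.log ‖gStar θ‖ :=
    hmod.mono fun θ hθ ↦ congrArg Real.log hθ
  have hglog := (hf.integrable_log_norm h0).congr hloglog
  calc ‖g w‖ ≤ Real.exp (poissonIntegral (fun θ ↦ Real.log ‖gStar θ‖) w) :=
        hg.norm_le_exp_poissonIntegral_log hgne hglog hw
    _ ≤ Real.exp (poissonIntegral (fun θ ↦ Real.log ‖fStar θ‖) w) :=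
        Real.exp_le_exp.2 (poissonIntegral_mono hglog (hf.integrable_log_norm h0)
          hloglog.symm.le hw)
    _ = ‖f w‖ := (hf.norm_eq_exp_poissonIntegral_log houter hw).symm

end HasHardyBoundary

theorem exists_inner_factor_general {f g : ℂ → ℂ} {fStar gStar : ℝ → ℂ}
    (hf : HasHardyBoundary f fStar) (hg : HasHardyBoundary g gStar)
    (hmod : ∀ᵐ θ ∂arcMeasure, ‖fStar θ‖ = ‖gStar θ‖)
    (houter : ‖f 0‖ = Real.exp (∫ θ, Real.log ‖fStar θ‖ ∂arcMeasure)) :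
    ∃ u : ℂ → ℂ,
      DifferentiableOn ℂ u (ball 0 1) ∧
      (∃ C : ℝ, ∀ z ∈ ball (0 : ℂ) 1, ‖u z‖ ≤ C) ∧
      (∃ uStar : ℝ → ℂ,
        (∀ᵐ θ ∂arcMeasure, Tendsto (fun r ↦ u (circleMap 0 r θ)) (𝓝[<] 1) (𝓝 (uStar θ))) ∧
        ∀ᵐ θ ∂arcMeasure, ‖uStar θ‖ = 1) ∧
      ∀ z ∈ ball (0 : ℂ) 1, g z = u z * f z := by
  have hf0 : ∀ z ∈ ball (0 : ℂ) 1, f z ≠ 0 := fun z hz ↦ norm_pos_iff.1 <|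
    (hf.norm_eq_exp_poissonIntegral_log houter hz).symm ▸ Real.exp_pos _
  have hne := hf.ae_ne_zero (hf0 0 (mem_ball_self one_pos))
  refine ⟨fun z ↦ g z / f z, hg.differentiableOn.div hf.differentiableOn hf0,
    ⟨1, fun z hz ↦ ?_⟩, ⟨fun θ ↦ gStar θ / fStar θ, ?_, ?_⟩,
    fun z hz ↦ (div_mul_cancel₀ _ (hf0 z hz)).symm⟩
  · rw [norm_div]
    exact div_le_one_of_le₀ (hf.norm_le_norm_of_outer hg hmod houter hz) (norm_nonneg _)
  · filter_upwards [hf.tendsto_radial, hg.tendsto_radial, hne] with θ hfθ hgθ hθ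
    exact hgθ.div hfθ hθ
  · filter_upwards [hmod, hne] with θ hθ hfθ
    rw [norm_div, ← hθ, div_self (norm_ne_zero_iff.2 hfθ)]

/-! ### Power series with square-summable coefficients -/

theorem differentiableOn_of_hasSum {f : ℂ → ℂ} {a : ℕ → ℂ}
    (hf : ∀ z ∈ ball (0 : ℂ) 1, HasSum (fun n ↦ a n * z ^ n) (f z)) :
    DifferentiableOn ℂ f (ball 0 1) := by
  have hball : Metric.eball (0 : ℂ) 1 = ball 0 1 := by
    rw [← ENNReal.coe_one, Metric.eball_coe, NNReal.coe_one]
  have hpow : HasFPowerSeriesOnBall f (.ofScalars ℂ a) 0 1 := by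
    refine ⟨?_, one_pos, fun {y} hy ↦ by simpa [mul_comm] using hf y (hball ▸ hy)⟩
    refine le_of_forall_lt_imp_le_of_dense fun r hr ↦ ?_
    lift r to NNReal using hr.ne_top
    refine FormalMultilinearSeries.le_radius_of_summable _ ?_
    simpa using (hf r (by simpa using hr)).summable.norm
  simpa [hball] using hpow.differentiableOn

theorem eLpNorm_two_polynomial_eval (P : Polynomial ℂ) :
    eLpNorm (fun θ ↦ P.eval (circleMap 0 1 θ)) 2 arcMeasure =
      ENNReal.ofReal √(∑ n ∈ P.support, ‖P.coeff n‖ ^ 2) := by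
  have hP : Continuous fun θ ↦ P.eval (circleMap 0 1 θ) := by fun_prop
  have hmem : MemLp (fun θ ↦ P.eval (circleMap 0 1 θ)) 2 arcMeasure :=
    (memLp_two_iff_integrable_sq_norm hP.aestronglyMeasurable).2
      (integrable_arcMeasure_of_continuous (by fun_prop))
  rw [hmem.eLpNorm_eq_integral_rpow_norm two_ne_zero ENNReal.ofNat_ne_top,
    P.sum_sq_norm_coeff_eq_circleAverage, circleAverage_eq_integral_arcMeasure,
    Real.sqrt_eq_rpow]
  simp

theorem eLpNorm_two_le_of_hasSum {c : ℕ → ℂ} {F : ℝ → ℂ} {A : ℝ}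
    (hc : ∀ s : Finset ℕ, ∑ n ∈ s, ‖c n‖ ^ 2 ≤ A)
    (hF : ∀ θ, HasSum (fun n ↦ c n * circleMap 0 1 θ ^ n) (F θ)) :
    eLpNorm F 2 arcMeasure ≤ ENNReal.ofReal √A := by
  let P (N : ℕ) : Polynomial ℂ := (PowerSeries.mk c).trunc N
  refine Lp.eLpNorm_le_of_ae_tendsto (u := atTop)
    (f := fun N θ ↦ (P N).eval (circleMap 0 1 θ)) (.of_forall fun N ↦ ?_)
    (fun N ↦ (by fun_prop : Continuous _).aestronglyMeasurable) (ae_of_all _ fun θ ↦ ?_)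
  · rw [eLpNorm_two_polynomial_eval]
    have hcoeff (n : ℕ) : ‖(P N).coeff n‖ ≤ ‖c n‖ := by
      by_cases hn : n < N <;> simp [P, PowerSeries.coeff_trunc, hn]
    gcongr
    exact (Finset.sum_le_sum fun n _ ↦ pow_le_pow_left₀ (norm_nonneg _) (hcoeff n) 2).trans
      (hc (P N).support)
  · simpa [P, Polynomial.eval, PowerSeries.eval₂_trunc_eq_sum_range] using (hF θ).tendsto_sum_nat

section HardyTwo

variable {f : ℂ → ℂ} {a : ℕ → ℂ}

theorem hasSum_dilate (hf : ∀ z ∈ ball (0 : ℂ) 1, HasSum (fun n ↦ a n * z ^ n) (f z)) {r : ℝ}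
    (hr : r ∈ Ioo (0 : ℝ) 1) (θ : ℝ) :
    HasSum (fun n ↦ a n * r ^ n * circleMap 0 1 θ ^ n) (f (circleMap 0 r θ)) := by
  have hmem : circleMap 0 r θ ∈ ball (0 : ℂ) 1 := by
    simpa [circleMap_zero, abs_of_pos hr.1] using hr.2
  convert! hf (circleMap 0 r θ) hmem using 2 with n
  rw [circleMap_zero_eq_real_mul r, mul_pow, mul_assoc]

theorem sq_norm_mul_one_sub_pow_le {r : ℝ} (hr : r ∈ Ioo (0 : ℝ) 1) (n : ℕ) :
    (‖a n‖ * (1 - r ^ n)) ^ 2 ≤ ‖a n‖ ^ 2 := by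
  have hrn : r ^ n ≤ 1 := pow_le_one₀ hr.1.le hr.2.le
  exact pow_le_pow_left₀ (mul_nonneg (norm_nonneg _) (sub_nonneg.2 hrn))
    (mul_le_of_le_one_right (norm_nonneg _) (sub_le_self _ (pow_nonneg hr.1.le n))) 2

theorem eLpNorm_two_dilate_sub_dilate_le
    (hf : ∀ z ∈ ball (0 : ℂ) 1, HasSum (fun n ↦ a n * z ^ n) (f z))
    (ha : Summable fun n ↦ ‖a n‖ ^ 2) {r s : ℝ} (hr : r ∈ Ioo (0 : ℝ) 1)
    (hs : s ∈ Ico r 1) :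
    eLpNorm (fun θ ↦ f (circleMap 0 r θ) - f (circleMap 0 s θ)) 2 arcMeasure ≤
      ENNReal.ofReal √(∑' n, (‖a n‖ * (1 - r ^ n)) ^ 2) := by
  have hs' : s ∈ Ioo 0 1 := ⟨hr.1.trans_le hs.1, hs.2⟩
  refine eLpNorm_two_le_of_hasSum (c := fun n ↦ a n * (r ^ n - s ^ n)) (fun t ↦ ?_) fun θ ↦ ?_
  · refine le_trans (Finset.sum_le_sum fun n _ ↦ ?_)
      ((ha.of_nonneg_of_le (fun n ↦ sq_nonneg _) (sq_norm_mul_one_sub_pow_le hr)).sum_le_tsum t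
        fun n _ ↦ sq_nonneg _)
    have hrs : r ^ n ≤ s ^ n := pow_le_pow_left₀ hr.1.le hs.1 n
    have hs1 : s ^ n ≤ 1 := pow_le_one₀ hs'.1.le hs.2.le
    rw [norm_mul, ← ofReal_pow, ← ofReal_pow, ← ofReal_sub, norm_real, Real.norm_eq_abs,
      abs_sub_comm, abs_of_nonneg (sub_nonneg.2 hrs)]
    gcongr
  · convert! (hasSum_dilate hf hr θ).sub (hasSum_dilate hf hs' θ) using 2 with n
    ring

theorem eLpNorm_two_dilate_sub_radialLimit_le
    (hf : ∀ z ∈ ball (0 : ℂ) 1, HasSum (fun n ↦ a n * z ^ n) (f z))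
    (ha : Summable fun n ↦ ‖a n‖ ^ 2) {fStar : ℝ → ℂ}
    (hfStar : ∀ᵐ θ ∂arcMeasure, Tendsto (fun r ↦ f (circleMap 0 r θ)) (𝓝[<] 1) (𝓝 (fStar θ)))
    {r : ℝ} (hr : r ∈ Ioo (0 : ℝ) 1) :
    eLpNorm ((fun θ ↦ f (circleMap 0 r θ)) - fStar) 2 arcMeasure ≤
      ENNReal.ofReal √(∑' n, (‖a n‖ * (1 - r ^ n)) ^ 2) := by
  have hfd := differentiableOn_of_hasSum hf
  obtain ⟨s, -, hsr, hs⟩ := exists_seq_strictMono_tendsto' hr.2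
  have hs1 : Tendsto s atTop (𝓝[<] 1) :=
    tendsto_nhdsWithin_iff.2 ⟨hs, .of_forall fun k ↦ (hsr k).2⟩
  refine Lp.eLpNorm_le_of_ae_tendsto (u := atTop)
    (f := fun k θ ↦ f (circleMap 0 r θ) - f (circleMap 0 (s k) θ))
    (.of_forall fun k ↦ eLpNorm_two_dilate_sub_dilate_le hf ha hr ⟨(hsr k).1.le, (hsr k).2⟩)
    (fun k ↦ ?_) ?_
  · exact ((continuous_comp_circleMap hfd hr).sub (continuous_comp_circleMap hfd
      ⟨hr.1.trans (hsr k).1, (hsr k).2⟩)).aestronglyMeasurable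
  · filter_upwards [hfStar] with θ hθ
    exact tendsto_const_nhds.sub (hθ.comp hs1)

theorem tendsto_tsum_sq_norm_mul_one_sub_pow (ha : Summable fun n ↦ ‖a n‖ ^ 2) :
    Tendsto (fun r : ℝ ↦ ∑' n, (‖a n‖ * (1 - r ^ n)) ^ 2) (𝓝[<] 1) (𝓝 0) := by
  rw [← tsum_zero (α := ℝ) (β := ℕ)]
  refine tendsto_tsum_of_dominated_convergence ha (fun n ↦ ?_) ?_
  · have : Continuous fun r : ℝ ↦ (‖a n‖ * (1 - r ^ n)) ^ 2 := by fun_prop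
    simpa using (this.tendsto 1).mono_left nhdsWithin_le_nhds
  · filter_upwards [Ioo_mem_nhdsLT one_pos] with r hr n
    rw [Real.norm_of_nonneg (sq_nonneg _)]
    exact sq_norm_mul_one_sub_pow_le hr n

theorem aestronglyMeasurable_radialLimit (hf : DifferentiableOn ℂ f (ball 0 1)) {fStar : ℝ → ℂ}
    (hfStar : ∀ᵐ θ ∂arcMeasure, Tendsto (fun r ↦ f (circleMap 0 r θ)) (𝓝[<] 1) (𝓝 (fStar θ))) :
    AEStronglyMeasurable fStar arcMeasure := by
  obtain ⟨s, -, hs0, hs⟩ := exists_seq_strictMono_tendsto' (zero_lt_one (α := ℝ))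
  have hs1 : Tendsto s atTop (𝓝[<] 1) :=
    tendsto_nhdsWithin_iff.2 ⟨hs, .of_forall fun k ↦ (hs0 k).2⟩
  exact aestronglyMeasurable_of_tendsto_ae atTop
    (fun k ↦ (continuous_comp_circleMap hf (hs0 k)).aestronglyMeasurable)
    (hfStar.mono fun θ hθ ↦ hθ.comp hs1)

theorem hasHardyBoundary_of_summable_sq
    (hf : ∀ z ∈ ball (0 : ℂ) 1, HasSum (fun n ↦ a n * z ^ n) (f z))
    (ha : Summable fun n ↦ ‖a n‖ ^ 2) {fStar : ℝ → ℂ}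
    (hfStar : ∀ᵐ θ ∂arcMeasure, Tendsto (fun r ↦ f (circleMap 0 r θ)) (𝓝[<] 1) (𝓝 (fStar θ))) :
    HasHardyBoundary f fStar := by
  have hfd := differentiableOn_of_hasSum hf
  have hmeas := aestronglyMeasurable_radialLimit hfd hfStar
  have hle {r : ℝ} (hr : r ∈ Ioo (0 : ℝ) 1) :
      eLpNorm ((fun θ ↦ f (circleMap 0 r θ)) - fStar) 1 arcMeasure ≤
        ENNReal.ofReal √(∑' n, (‖a n‖ * (1 - r ^ n)) ^ 2) :=
    (eLpNorm_le_eLpNorm_of_exponent_le one_le_two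
      ((continuous_comp_circleMap hfd hr).aestronglyMeasurable.sub hmeas)).trans
      (eLpNorm_two_dilate_sub_radialLimit_le hf ha hfStar hr)
  refine ⟨hfd, hfStar, ?_, ?_⟩
  · have hr : (1 / 2 : ℝ) ∈ Ioo 0 1 := by norm_num
    have hcont := continuous_comp_circleMap hfd hr
    have hsub : Integrable ((fun θ ↦ f (circleMap 0 (1 / 2) θ)) - fStar) arcMeasure :=
      memLp_one_iff_integrable.1
        ⟨hcont.aestronglyMeasurable.sub hmeas, (hle hr).trans_lt ENNReal.ofReal_lt_top⟩
    simpa using (integrable_arcMeasure_of_continuous hcont).sub hsub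
  · have hlim := ENNReal.tendsto_ofReal ((Real.continuous_sqrt.tendsto 0).comp
      (tendsto_tsum_sq_norm_mul_one_sub_pow ha))
    rw [Real.sqrt_zero, ENNReal.ofReal_zero] at hlim
    refine tendsto_of_tendsto_of_tendsto_of_le_of_le' tendsto_const_nhds hlim
      (.of_forall fun _ ↦ zero_le) ?_
    filter_upwards [Ioo_mem_nhdsLT one_pos] with r hr using hle hr

end HardyTwo

end HardySpace

/-- Let `f, g ∈ H₂` (Taylor coefficients `a`, `b` with `Σ |aₙ|² < ∞`,
`Σ |bₙ|² < ∞`) have radial boundary values `fStar`, `gStar` with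
`|f*(e^{iθ})| = |g*(e^{iθ})|` a.e. on `[0, 2π)`, and suppose `f` is outer:
`|f 0| = exp((2π)⁻¹ ∫₀^{2π} log |f*(e^{iθ})| dθ)`.  Then there exists an inner
function `u ∈ H_∞` (bounded analytic on the disk whose radial boundary values
have modulus `1` a.e.) such that `g = u·f` on the unit disk. -/
theorem exists_inner_factor
    (f g : ℂ → ℂ) (a b : ℕ → ℂ) (fStar gStar : ℝ → ℂ)
    (hfa : ∀ z ∈ Metric.ball (0 : ℂ) 1, HasSum (fun n : ℕ => a n * z ^ n) (f z))
    (hgb : ∀ z ∈ Metric.ball (0 : ℂ) 1, HasSum (fun n : ℕ => b n * z ^ n) (g z))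
    (ha2 : Summable fun n : ℕ => ‖a n‖ ^ 2)
    (hb2 : Summable fun n : ℕ => ‖b n‖ ^ 2)
    (hfStar : ∀ᵐ (θ : ℝ) ∂(volume.restrict (Ico (0 : ℝ) (2 * Real.pi))),
      Tendsto (fun r : ℝ => f ((r : ℂ) * Complex.exp ((θ : ℂ) * Complex.I)))
        (nhdsWithin 1 (Iio 1)) (nhds (fStar θ)))
    (hgStar : ∀ᵐ (θ : ℝ) ∂(volume.restrict (Ico (0 : ℝ) (2 * Real.pi))),
      Tendsto (fun r : ℝ => g ((r : ℂ) * Complex.exp ((θ : ℂ) * Complex.I)))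
        (nhdsWithin 1 (Iio 1)) (nhds (gStar θ)))
    (hmod : ∀ᵐ (θ : ℝ) ∂(volume.restrict (Ico (0 : ℝ) (2 * Real.pi))),
      ‖fStar θ‖ = ‖gStar θ‖)
    (houter : ‖f 0‖ =
      Real.exp ((2 * Real.pi)⁻¹ * ∫ θ in (0 : ℝ)..(2 * Real.pi), Real.log ‖fStar θ‖)) :
    ∃ u : ℂ → ℂ,
      DifferentiableOn ℂ u (Metric.ball (0 : ℂ) 1) ∧
      (∃ C : ℝ, ∀ z ∈ Metric.ball (0 : ℂ) 1, ‖u z‖ ≤ C) ∧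
      (∃ uStar : ℝ → ℂ,
        (∀ᵐ (θ : ℝ) ∂(volume.restrict (Ico (0 : ℝ) (2 * Real.pi))),
          Tendsto (fun r : ℝ => u ((r : ℂ) * Complex.exp ((θ : ℂ) * Complex.I)))
            (nhdsWithin 1 (Iio 1)) (nhds (uStar θ))) ∧
        (∀ᵐ (θ : ℝ) ∂(volume.restrict (Ico (0 : ℝ) (2 * Real.pi))),
          ‖uStar θ‖ = 1)) ∧
      ∀ z ∈ Metric.ball (0 : ℂ) 1, g z = u z * f z := by
  simp only [← ae_arcMeasure_iff, ← circleMap_zero, ← smul_eq_mul (2 * Real.pi)⁻¹,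
    ← integral_arcMeasure_eq] at *
  exact exists_inner_factor_general (hasHardyBoundary_of_summable_sq hfa ha2 hfStar)
    (hasHardyBoundary_of_summable_sq hgb hb2 hgStar) hmod houter
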